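/- arXiv:2210.03009 — 7 statements merged into one kernel-verified Lean document; each statement's English description precedes it below -/
import Mathlib

section
/- For every Λ > 0 there exists a C^∞ function g : ℝ → ℝ such that g(u) = G_Λ(u) for all u > 0, and likewise a C^∞ function g̃ : ℝ → ℝ such that g̃(u) = G_Λ(u) for all u < 0. That is, each one-sided restriction of the cutoff propagator G_Λ extends smoothly across u = 0. -/
open MeasureTheory Topology Filter

/-- The one-dimensional heat kernel `h_t(u) = (4πt)^(−1/2) · exp(−u²/(4t))`. -/
noncomputable def heat (t u : ℝ) : ℝ :=
  (Real.sqrt (4 * Real.pi * t))⁻¹ * Real.exp (-(u ^ 2) / (4 * t))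

/-- The `u`-derivative of the heat kernel, `h_t′(u) = −(u/(2t)) · h_t(u)`. -/
noncomputable def heat' (t u : ℝ) : ℝ := -(u / (2 * t)) * heat t u

/-- `(φh_t)′(u) = φ′(u)·h_t(u) + φ(u)·h_t′(u)`. -/
noncomputable def phiHeat' (φ : ℝ → ℝ) (t u : ℝ) : ℝ :=
  deriv φ u * heat t u + φ u * heat' t u

/-- `G_Λ(u) = ∫₀^Λ (φh_t)′(u) dt`. -/
noncomputable def Gcut (φ : ℝ → ℝ) (Λ u : ℝ) : ℝ := ∫ t in Set.Ioo 0 Λ, phiHeat' φ t u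

lemma int_aux (F f : ℝ → ℝ) (Λ c : ℝ) (hΛ : 0 < Λ) (hd : ∀ t, 0 < t → HasDerivAt F (f t) t)
    (hf : ∀ t, 0 < t → 0 ≤ f t) (hl : Tendsto F (𝓝[>] 0) (𝓝 c)) :
    IntegrableOn f (Set.Ioo 0 Λ) ∧ ∫ t in Set.Ioo 0 Λ, f t = F Λ - c := by
  have hdu : ∀ t ∈ Set.Ioo 0 Λ, HasDerivAt (Function.update F 0 c) (f t) t := by
    intro t ht
    refine (hd t ht.1).congr_of_eventuallyEq ?_
    filter_upwards [lt_mem_nhds ht.1] with s hs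
    exact Function.update_of_ne hs.ne' _ _
  have hc : ContinuousOn (Function.update F 0 c) (Set.Icc 0 Λ) := by
    rw [continuousOn_update_iff]
    refine ⟨fun t ht => (hd t (lt_of_le_of_ne ht.1.1 (Ne.symm ht.2))).continuousAt.continuousWithinAt, fun _ => ?_⟩
    refine hl.mono_left (nhdsWithin_mono _ ?_)
    intro t ht
    exact lt_of_le_of_ne ht.1.1 (Ne.symm ht.2)
  have hi : IntervalIntegrable f volume 0 Λ := by
    apply intervalIntegral.intervalIntegrable_deriv_of_nonneg (g := Function.update F 0 c)
    · rwa [Set.uIcc_of_le hΛ.le]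
    · simpa [hΛ.le] using hdu
    · intro t ht
      simp only [hΛ.le, min_eq_left] at ht
      exact hf t ht.1
  constructor
  · exact ((intervalIntegrable_iff_integrableOn_Ioc_of_le hΛ.le).1 hi).mono_set Set.Ioo_subset_Ioc_self
  · rw [← integral_Ioc_eq_integral_Ioo, ← intervalIntegral.integral_of_le hΛ.le,
      intervalIntegral.integral_eq_sub_of_hasDerivAt_of_le hΛ.le hc hdu hi]
    simp [hΛ.ne']

noncomputable def EE (x : ℝ) : ℝ := ∫ s in (0:ℝ)..x, Real.exp (-s ^ 2)

lemma EE_deriv (x : ℝ) : HasDerivAt EE (Real.exp (-x ^ 2)) x := by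
  have hc : Continuous fun s : ℝ => Real.exp (-s ^ 2) := by fun_prop
  exact hc.integral_hasStrictDerivAt 0 x |>.hasDerivAt

lemma EE_smooth : ContDiff ℝ (⊤ : ℕ∞) EE := by
  rw [contDiff_infty_iff_deriv]
  refine ⟨fun x => (EE_deriv x).differentiableAt, ?_⟩
  have : deriv EE = fun x => Real.exp (-x ^ 2) := funext fun x => (EE_deriv x).deriv
  rw [this]
  fun_prop

lemma EE_lim : Tendsto EE atTop (𝓝 (Real.sqrt Real.pi / 2)) := by
  have h := integral_gaussian_Ioi 1
  have hi : IntegrableOn (fun x : ℝ => Real.exp (-x ^ 2)) (Set.Ioi 0) := by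
    have := (integrable_exp_neg_mul_sq (b := 1) one_pos).integrableOn (s := Set.Ioi 0)
    simpa using this
  have := intervalIntegral_tendsto_integral_Ioi 0 hi tendsto_id
  simp at h
  rwa [h] at this

lemma heat_deriv_t (u t : ℝ) (ht : 0 < t) :
    HasDerivAt (fun t => heat t u) (-(1 / (2 * t)) * heat t u + u ^ 2 / (4 * t ^ 2) * heat t u) t := by
  have hp := Real.pi_pos
  have h0 : 0 < 4 * Real.pi * t := by positivity
  have h1 : HasDerivAt (fun t : ℝ => 4 * Real.pi * t) (4 * Real.pi) t := by
    simpa using (hasDerivAt_id t).const_mul (4 * Real.pi)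
  have h2 := (h1.sqrt h0.ne').inv (Real.sqrt_pos.2 h0).ne'
  have h3 : HasDerivAt (fun t : ℝ => 4 * t) 4 t := by
    simpa using (hasDerivAt_id t).const_mul 4
  have h4 := ((hasDerivAt_const t (-(u ^ 2))).div h3 (by positivity)).exp
  refine (h2.mul h4).congr_deriv ?_
  have hs : 0 < Real.sqrt (4 * Real.pi * t) := Real.sqrt_pos.2 h0
  have hs2 := Real.sq_sqrt h0.le
  simp only [heat, Pi.inv_apply]
  set s := Real.sqrt (4 * Real.pi * t) with hsdef
  have hpi : Real.pi = s ^ 2 / (4 * t) := by rw [hs2]; field_simp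
  rw [hpi]
  simp only [Pi.div_apply]
  field_simp
  ring

lemma EE_deriv_t (u t : ℝ) (ht : 0 < t) :
    HasDerivAt (fun t => (Real.sqrt Real.pi)⁻¹ * EE (u / (2 * Real.sqrt t))) (heat' t u) t := by
  have hp := Real.pi_pos
  have hs : 0 < Real.sqrt t := Real.sqrt_pos.2 ht
  have h1 : HasDerivAt (fun t : ℝ => 2 * Real.sqrt t) (2 * (1 / (2 * Real.sqrt t))) t :=
    (Real.hasDerivAt_sqrt ht.ne').const_mul 2
  have h2 := (hasDerivAt_const t u).div h1 (by positivity)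
  have h3 := ((EE_deriv _).comp t h2).const_mul (Real.sqrt Real.pi)⁻¹
  refine h3.congr_deriv ?_
  have e4 : Real.sqrt 4 = 2 := by
    rw [show (4:ℝ) = 2 ^ 2 by norm_num]; exact Real.sqrt_sq (by norm_num)
  have e1 : Real.sqrt (4 * Real.pi * t) = 2 * Real.sqrt Real.pi * Real.sqrt t := by
    rw [Real.sqrt_mul (by positivity), Real.sqrt_mul (by positivity), e4]
  have e2 : -(u / (2 * Real.sqrt t)) ^ 2 = -(u ^ 2) / (4 * t) := by
    rw [div_pow, mul_pow, Real.sq_sqrt ht.le]; ring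
  have hq : 0 < Real.sqrt Real.pi := Real.sqrt_pos.2 hp
  simp only [heat', heat, e1, Pi.div_apply, e2]
  have e3 : t = Real.sqrt t ^ 2 := (Real.sq_sqrt ht.le).symm
  generalize Real.exp (-(u ^ 2) / (4 * t)) = E
  set s := Real.sqrt t with hsd
  rw [e3]
  field_simp
  ring

lemma EE_lim_t (u : ℝ) (hu : 0 < u) :
    Tendsto (fun t => (Real.sqrt Real.pi)⁻¹ * EE (u / (2 * Real.sqrt t))) (𝓝[>] 0) (𝓝 (1 / 2)) := by
  have hq : 0 < Real.sqrt Real.pi := Real.sqrt_pos.2 Real.pi_pos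
  have h0 : Tendsto (fun t : ℝ => 2 * Real.sqrt t) (𝓝[>] 0) (𝓝[>] 0) := by
    rw [tendsto_nhdsWithin_iff]
    constructor
    · have : Continuous fun t : ℝ => 2 * Real.sqrt t := by fun_prop
      have := this.tendsto 0
      simp only [Real.sqrt_zero, mul_zero] at this
      exact this.mono_left nhdsWithin_le_nhds
    · filter_upwards [self_mem_nhdsWithin] with t ht
      have : 0 < Real.sqrt t := Real.sqrt_pos.2 ht
      exact mul_pos two_pos this
  have h1 : Tendsto (fun t : ℝ => u / (2 * Real.sqrt t)) (𝓝[>] 0) atTop := by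
    simpa only [div_eq_mul_inv, Function.comp_def] using (tendsto_inv_nhdsGT_zero.comp h0).const_mul_atTop hu
  have h2 := (EE_lim.comp h1).const_mul (Real.sqrt Real.pi)⁻¹
  have e : (Real.sqrt Real.pi)⁻¹ * (Real.sqrt Real.pi / 2) = 1 / 2 := by field_simp
  rw [e] at h2
  exact h2

lemma heat_nonneg (t u : ℝ) : 0 ≤ heat t u := by unfold heat; positivity

lemma theat_lim (u : ℝ) : Tendsto (fun t => 2 * t * heat t u) (𝓝[>] 0) (𝓝 0) := by
  have hp := Real.pi_pos
  have hb : Tendsto (fun t : ℝ => 2 * Real.sqrt t) (𝓝[>] 0) (𝓝 0) := by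
    have : Continuous fun t : ℝ => 2 * Real.sqrt t := by fun_prop
    have := this.tendsto 0
    simp only [Real.sqrt_zero, mul_zero] at this
    exact this.mono_left nhdsWithin_le_nhds
  refine tendsto_of_tendsto_of_tendsto_of_le_of_le' tendsto_const_nhds hb ?_ ?_
  · filter_upwards [self_mem_nhdsWithin] with t ht
    have ht : 0 < t := ht
    have := heat_nonneg t u
    positivity
  · filter_upwards [self_mem_nhdsWithin] with t ht
    have ht : 0 < t := ht
    have hs : 0 < Real.sqrt t := Real.sqrt_pos.2 ht
    have h1 : heat t u ≤ (Real.sqrt t)⁻¹ := by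
      unfold heat
      have e : Real.exp (-(u ^ 2) / (4 * t)) ≤ 1 := by
        rw [Real.exp_le_one_iff, neg_div]
        have : 0 ≤ u ^ 2 / (4 * t) := by positivity
        linarith
      have e2 : Real.sqrt t ≤ Real.sqrt (4 * Real.pi * t) := by
        apply Real.sqrt_le_sqrt
        nlinarith [Real.pi_gt_three]
      calc _ ≤ (Real.sqrt (4 * Real.pi * t))⁻¹ * 1 := by gcongr
        _ ≤ _ := by rw [mul_one]; gcongr
    calc 2 * t * heat t u ≤ 2 * t * (Real.sqrt t)⁻¹ := by gcongr
      _ = 2 * Real.sqrt t := by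
        rw [← div_eq_mul_inv, mul_div_assoc, Real.div_sqrt]

noncomputable def Bp (Λ u : ℝ) : ℝ := (Real.sqrt Real.pi)⁻¹ * EE (u / (2 * Real.sqrt Λ)) - 1 / 2

noncomputable def Ap (Λ u : ℝ) : ℝ := 2 * Λ * heat Λ u + u * Bp Λ u

lemma Bp_smooth (Λ : ℝ) : ContDiff ℝ (⊤ : ℕ∞) (Bp Λ) := by
  unfold Bp
  have : ContDiff ℝ (⊤ : ℕ∞) (fun u => EE (u / (2 * Real.sqrt Λ))) :=
    EE_smooth.comp (by fun_prop)
  fun_prop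

lemma Ap_smooth (Λ : ℝ) : ContDiff ℝ (⊤ : ℕ∞) (Ap Λ) := by
  have := Bp_smooth Λ
  unfold Ap heat
  fun_prop

lemma B_int (Λ u : ℝ) (hΛ : 0 < Λ) (hu : 0 < u) :
    IntegrableOn (fun t => heat' t u) (Set.Ioo 0 Λ) ∧ ∫ t in Set.Ioo 0 Λ, heat' t u = Bp Λ u := by
  have := int_aux (fun t => -((Real.sqrt Real.pi)⁻¹ * EE (u / (2 * Real.sqrt t)))) (fun t => -heat' t u)
    Λ (-(1 / 2)) hΛ (fun t ht => (EE_deriv_t u t ht).neg)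
    (fun t ht => by
      have := heat_nonneg t u
      simp only [heat', neg_mul, neg_neg]
      positivity) (EE_lim_t u hu).neg
  obtain ⟨h1, h2⟩ := this
  constructor
  · simpa using h1.neg
  · rw [integral_neg] at h2
    unfold Bp
    linarith

lemma A_int (Λ u : ℝ) (hΛ : 0 < Λ) (hu : 0 < u) :
    IntegrableOn (fun t => heat t u) (Set.Ioo 0 Λ) ∧ ∫ t in Set.Ioo 0 Λ, heat t u = Ap Λ u := by
  have := int_aux
    (fun t => 2 * t * heat t u + u * ((Real.sqrt Real.pi)⁻¹ * EE (u / (2 * Real.sqrt t))))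
    (fun t => heat t u)
    Λ (0 + u * (1 / 2)) hΛ (fun t ht => by
      have h1 : HasDerivAt (fun t : ℝ => 2 * t) 2 t := by
        simpa using (hasDerivAt_id t).const_mul 2
      refine ((h1.mul (heat_deriv_t u t ht)).add ((EE_deriv_t u t ht).const_mul u)).congr_deriv ?_
      simp only [heat']
      field_simp
      ring)
    (fun t ht => heat_nonneg t u) ((theat_lim u).add ((EE_lim_t u hu).const_mul u))
  obtain ⟨h1, h2⟩ := this
  refine ⟨h1, ?_⟩
  rw [h2]
  unfold Ap Bp
  ring

lemma G_split (φ : ℝ → ℝ) (Λ u : ℝ) (hA : IntegrableOn (fun t => heat t u) (Set.Ioo 0 Λ))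
    (hB : IntegrableOn (fun t => heat' t u) (Set.Ioo 0 Λ)) :
    Gcut φ Λ u = deriv φ u * (∫ t in Set.Ioo 0 Λ, heat t u)
      + φ u * ∫ t in Set.Ioo 0 Λ, heat' t u := by
  unfold Gcut phiHeat'
  rw [integral_add (hA.const_mul _) (hB.const_mul _), integral_const_mul, integral_const_mul]

/-- Each one-sided restriction of the cutoff propagator `G_Λ` extends smoothly across
`u = 0`: there are `C^∞` functions `g, g̃ : ℝ → ℝ` with `g = G_Λ` on `(0, ∞)` and
`g̃ = G_Λ` on `(−∞, 0)`. -/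
theorem stmt2 (φ : ℝ → ℝ) (hφ : ContDiff ℝ (⊤ : ℕ∞) φ) (hsupp : HasCompactSupport φ)
    (heven : ∀ x, φ (-x) = φ x) (δ : ℝ) (hδ : 0 < δ) (hone : ∀ x, |x| < δ → φ x = 1)
    (Λ : ℝ) (hΛ : 0 < Λ) :
    (∃ g : ℝ → ℝ, ContDiff ℝ (⊤ : ℕ∞) g ∧ ∀ u : ℝ, 0 < u → g u = Gcut φ Λ u) ∧
    (∃ gt : ℝ → ℝ, ContDiff ℝ (⊤ : ℕ∞) gt ∧ ∀ u : ℝ, u < 0 → gt u = Gcut φ Λ u) := by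
  have hd : ContDiff ℝ (⊤ : ℕ∞) (deriv φ) := (contDiff_infty_iff_deriv.1 hφ).2
  have hA := Ap_smooth Λ
  have hB := Bp_smooth Λ
  constructor
  · refine ⟨fun u => deriv φ u * Ap Λ u + φ u * Bp Λ u, by fun_prop, fun u hu => ?_⟩
    obtain ⟨a1, a2⟩ := A_int Λ u hΛ hu
    obtain ⟨b1, b2⟩ := B_int Λ u hΛ hu
    rw [G_split φ Λ u a1 b1, a2, b2]
  · refine ⟨fun u => deriv φ u * Ap Λ (-u) + φ u * (-Bp Λ (-u)), ?_, fun u hu => ?_⟩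
    · have hA' : ContDiff ℝ (⊤ : ℕ∞) (fun u => Ap Λ (-u)) := hA.comp contDiff_neg
      have hB' : ContDiff ℝ (⊤ : ℕ∞) (fun u => Bp Λ (-u)) := hB.comp contDiff_neg
      fun_prop
    · obtain ⟨a1, a2⟩ := A_int Λ (-u) hΛ (by linarith)
      obtain ⟨b1, b2⟩ := B_int Λ (-u) hΛ (by linarith)
      have e1 : ∀ t, heat t (-u) = heat t u := fun t => by simp [heat]
      have e2 : ∀ t, heat' t (-u) = -heat' t u := fun t => by
        simp only [heat', e1]; ring
      simp only [e1] at a1 a2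
      simp only [e2] at b1 b2
      have b1' : IntegrableOn (fun t => heat' t u) (Set.Ioo 0 Λ) := by simpa using b1.neg
      rw [integral_neg] at b2
      rw [G_split φ Λ u a1 b1', a2]
      beta_reduce
      rw [← b2, neg_neg]
end

section
/- For every Λ > 0, the one-sided limits of the cutoff propagator at the diagonal exist and are independent of Λ and of the cutoff: lim_{u→0⁺} G_Λ(u) = −1/2 and lim_{u→0⁻} G_Λ(u) = +1/2. In particular the jump lim_{u→0⁻} G_Λ(u) − lim_{u→0⁺} G_Λ(u) equals 1. -/
open MeasureTheory Topology Filter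

theorem aux_image (Λ u : ℝ) (hΛ : 0 < Λ) (hu : 0 < u) :
    (fun w : ℝ => u ^ 2 / (4 * w ^ 2)) '' Set.Ioi (u / (2 * Real.sqrt Λ)) = Set.Ioo 0 Λ := by
  have hs : 0 < Real.sqrt Λ := Real.sqrt_pos.2 hΛ
  ext t
  constructor
  · rintro ⟨w, hw, rfl⟩
    have hw' : u / (2 * Real.sqrt Λ) < w := hw
    have hw0 : 0 < w := lt_trans (by positivity) hw'
    refine ⟨by positivity, ?_⟩
    show u ^ 2 / (4 * w ^ 2) < Λ
    rw [div_lt_iff₀ (by positivity)] at hw' ⊢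
    have h1 : u ^ 2 < (w * (2 * Real.sqrt Λ)) ^ 2 := by gcongr
    have h2 := Real.sq_sqrt hΛ.le
    calc u ^ 2 < _ := h1
      _ = 4 * w ^ 2 * (Real.sqrt Λ) ^ 2 := by ring
      _ = _ := by rw [h2]; ring
  · rintro ⟨h0, h1⟩
    have ht : 0 < Real.sqrt t := Real.sqrt_pos.2 h0
    have hlt : Real.sqrt t < Real.sqrt Λ := Real.sqrt_lt_sqrt h0.le h1
    refine ⟨u / (2 * Real.sqrt t), ?_, ?_⟩
    · show u / (2 * Real.sqrt Λ) < u / (2 * Real.sqrt t)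
      gcongr
    · show u ^ 2 / (4 * (u / (2 * Real.sqrt t)) ^ 2) = t
      have h2 := Real.sq_sqrt h0.le
      field_simp
      rw [h2]; ring

theorem aux_int (Λ u : ℝ) (hΛ : 0 < Λ) (hu : 0 < u) :
    ∫ t in Set.Ioo 0 Λ, heat' t u =
      -(Real.sqrt Real.pi)⁻¹ * ∫ w in Set.Ioi (u / (2 * Real.sqrt Λ)), Real.exp (-1 * w ^ 2) := by
  have hs : 0 < Real.sqrt Λ := Real.sqrt_pos.2 hΛ
  have hc : 0 < u / (2 * Real.sqrt Λ) := by positivity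
  have hp : 0 < Real.sqrt Real.pi := Real.sqrt_pos.2 Real.pi_pos
  rw [← aux_image Λ u hΛ hu, integral_image_eq_integral_abs_deriv_smul
    (f' := fun w => -(u ^ 2 / (2 * w ^ 3))) measurableSet_Ioi, ← integral_const_mul]
  · refine setIntegral_congr_fun measurableSet_Ioi ?_
    intro w hw
    have hw0 : 0 < w := lt_trans hc hw
    have e1 : Real.sqrt (4 * Real.pi * (u ^ 2 / (4 * w ^ 2))) = Real.sqrt Real.pi * (u / w) := by
      rw [show 4 * Real.pi * (u ^ 2 / (4 * w ^ 2)) = Real.pi * (u / w) ^ 2 by field_simp,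
        Real.sqrt_mul Real.pi_pos.le, Real.sqrt_sq (by positivity)]
    have e2 : -(u ^ 2) / (4 * (u ^ 2 / (4 * w ^ 2))) = -1 * w ^ 2 := by field_simp
    simp only [heat', heat, smul_eq_mul, abs_neg]
    rw [e1, e2, abs_of_pos (by positivity)]
    field_simp
    try ring
  · intro w hw
    have hw0 : 0 < w := lt_trans hc hw
    have h := ((hasDerivAt_const w (u ^ 2)).div ((hasDerivAt_pow 2 w).const_mul 4)
      (by positivity : (4 * w ^ 2 : ℝ) ≠ 0))
    refine (h.congr_deriv ?_).hasDerivWithinAt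
    field_simp
    try norm_num
    try ring
  · intro a ha b hb hab
    have ha0 : 0 < a := lt_trans hc ha
    have hb0 : 0 < b := lt_trans hc hb
    have hab' : u ^ 2 / (4 * a ^ 2) = u ^ 2 / (4 * b ^ 2) := hab
    have : a ^ 2 = b ^ 2 := by
      field_simp at hab'
      linarith
    exact (pow_left_inj₀ ha0.le hb0.le two_ne_zero).1 this

theorem aux_G (φ : ℝ → ℝ) (δ : ℝ) (hone : ∀ x, |x| < δ → φ x = 1)
    (Λ u : ℝ) (hu : |u| < δ) : Gcut φ Λ u = ∫ t in Set.Ioo 0 Λ, heat' t u := by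
  have h1 : φ =ᶠ[𝓝 u] fun _ => 1 := by
    filter_upwards [(isOpen_lt continuous_abs continuous_const).mem_nhds hu] with x hx
    exact hone x hx
  have h2 : deriv φ u = 0 := by rw [h1.deriv_eq]; simp
  simp [Gcut, phiHeat', h2, hone u hu]

theorem aux_lim (Λ : ℝ) (hΛ : 0 < Λ) :
    Tendsto (fun u => ∫ t in Set.Ioo 0 Λ, heat' t u) (𝓝[>] (0 : ℝ)) (𝓝 (-(1 / 2))) := by
  have hi : Integrable (fun w : ℝ => Real.exp (-1 * w ^ 2)) := integrable_exp_neg_mul_sq one_pos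
  have hc : Continuous fun c : ℝ => ∫ w in (0:ℝ)..c, Real.exp (-1 * w ^ 2) :=
    intervalIntegral.continuous_primitive (fun a b => hi.intervalIntegrable) 0
  have hp : 0 < Real.sqrt Real.pi := Real.sqrt_pos.2 Real.pi_pos
  have hF : Continuous fun u : ℝ => -(Real.sqrt Real.pi)⁻¹ * (Real.sqrt Real.pi / 2 -
      ∫ w in (0:ℝ)..(u / (2 * Real.sqrt Λ)), Real.exp (-1 * w ^ 2)) := by
    have := hc.comp (continuous_id.div_const (2 * Real.sqrt Λ))
    exact continuous_const.mul (continuous_const.sub this)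
  have h0 := (hF.tendsto 0).mono_left (nhdsWithin_le_nhds (s := Set.Ioi 0))
  have e : -(Real.sqrt Real.pi)⁻¹ * (Real.sqrt Real.pi / 2 -
      ∫ w in (0:ℝ)..((0:ℝ) / (2 * Real.sqrt Λ)), Real.exp (-1 * w ^ 2)) = -(1/2) := by
    rw [zero_div, intervalIntegral.integral_same]
    field_simp
    try ring
  rw [e] at h0
  refine h0.congr' ?_
  filter_upwards [self_mem_nhdsWithin] with u hu
  rw [aux_int Λ u hΛ hu]
  have h3 := intervalIntegral.integral_interval_add_Ioi (a := 0) (b := u / (2 * Real.sqrt Λ))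
    hi.integrableOn hi.integrableOn
  rw [integral_gaussian_Ioi 1, div_one] at h3
  rw [← h3]; ring

theorem stmt3 (φ : ℝ → ℝ) (hφ : ContDiff ℝ (⊤ : ℕ∞) φ) (hsupp : HasCompactSupport φ)
    (heven : ∀ x, φ (-x) = φ x) (δ : ℝ) (hδ : 0 < δ) (hone : ∀ x, |x| < δ → φ x = 1)
    (Λ : ℝ) (hΛ : 0 < Λ) :
    Tendsto (Gcut φ Λ) (𝓝[>] (0 : ℝ)) (𝓝 (-(1 / 2))) ∧
    Tendsto (Gcut φ Λ) (𝓝[<] (0 : ℝ)) (𝓝 (1 / 2)) ∧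
    (1 / 2 : ℝ) - (-(1 / 2)) = 1 := by
  have hn : ∀ᶠ u : ℝ in 𝓝 0, |u| < δ :=
    (isOpen_lt continuous_abs continuous_const).mem_nhds (by simpa using hδ)
  refine ⟨?_, ?_, by norm_num⟩
  · refine (aux_lim Λ hΛ).congr' ?_
    filter_upwards [nhdsWithin_le_nhds hn] with u hu
    exact (aux_G φ δ hone Λ u hu).symm
  · have hneg : Tendsto (fun u : ℝ => -u) (𝓝[<] (0:ℝ)) (𝓝[>] (0:ℝ)) := by
      simpa using tendsto_neg_nhdsLT (a := (0:ℝ))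
    have h := ((aux_lim Λ hΛ).comp hneg).neg
    rw [neg_neg] at h
    refine h.congr' ?_
    filter_upwards [nhdsWithin_le_nhds hn] with u hu
    rw [aux_G φ δ hone Λ u hu]
    simp only [Function.comp]
    rw [← integral_neg]
    congr 1
    ext t
    simp [heat', heat, neg_div]
end

section
/- For every t > 0, the function u ↦ ∫₀^t (1 − φ(u)) · h_s(u) ds is well defined for every u ∈ ℝ (the integrand is absolutely integrable in s on (0, t)), vanishes identically on the neighborhood of 0 where φ ≡ 1, and is a C^∞ function on all of ℝ. -/
open MeasureTheory Topology Filter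

theorem sqrt_inv_integrable (t : ℝ) (ht : 0 < t) :
    IntegrableOn (fun s : ℝ => (Real.sqrt (4 * Real.pi * s))⁻¹) (Set.Ioo 0 t) := by
  have h : IntervalIntegrable (fun s : ℝ => s ^ (-(1/2) : ℝ)) volume 0 t :=
    intervalIntegral.intervalIntegrable_rpow' (by norm_num)
  rw [intervalIntegrable_iff_integrableOn_Ioo_of_le ht.le] at h
  have h2 := h.const_mul ((Real.sqrt (4 * Real.pi))⁻¹)
  refine IntegrableOn.congr_fun h2 ?_ measurableSet_Ioo
  intro s hs
  have hs0 : 0 < s := hs.1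
  simp only
  rw [Real.sqrt_mul (show (0 : ℝ) ≤ 4 * Real.pi by positivity) s, mul_inv, Real.rpow_neg hs0.le, ← Real.sqrt_eq_rpow]

theorem heat_bound (m : ℕ) (a s x : ℝ) (ha : 0 < a) (hs : 0 < s) (hx : 4 * a ≤ x ^ 2) :
    ‖s⁻¹ ^ m * heat s x‖ ≤ (m.factorial / a ^ m) * (Real.sqrt (4 * Real.pi * s))⁻¹ := by
  have h0 : 0 ≤ s⁻¹ ^ m * heat s x := by unfold heat; positivity
  rw [Real.norm_of_nonneg h0]
  have h1 := Real.pow_div_factorial_le_exp (a / s) (by positivity) m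
  have h2 : Real.exp (-(x ^ 2) / (4 * s)) ≤ Real.exp (-(a / s)) := by
    apply Real.exp_le_exp.mpr
    rw [neg_div, neg_le_neg_iff, div_le_div_iff₀ hs (by positivity)]
    nlinarith
  have h3 : s⁻¹ ^ m * Real.exp (-(x ^ 2) / (4 * s)) ≤ m.factorial / a ^ m := by
    calc s⁻¹ ^ m * Real.exp (-(x ^ 2) / (4 * s)) ≤ s⁻¹ ^ m * Real.exp (-(a / s)) := by gcongr
      _ ≤ m.factorial / a ^ m := by
        rw [Real.exp_neg, ← div_eq_mul_inv, div_le_div_iff₀ (Real.exp_pos _) (by positivity)]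
        rw [div_le_iff₀ (by positivity), div_pow] at h1
        calc s⁻¹ ^ m * a ^ m = a ^ m / s ^ m := by rw [inv_pow]; ring
          _ ≤ _ := by linarith
  unfold heat
  calc _ = (s⁻¹ ^ m * Real.exp (-(x ^ 2) / (4 * s))) * (Real.sqrt (4 * Real.pi * s))⁻¹ := by ring
    _ ≤ _ := by gcongr

theorem heat_meas (m : ℕ) (x : ℝ) : Measurable (fun s : ℝ => s⁻¹ ^ m * heat s x) := by
  unfold heat; fun_prop

theorem heat_integrable (m : ℕ) (x t : ℝ) (ht : 0 < t) (hx : x ≠ 0) :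
    IntegrableOn (fun s : ℝ => s⁻¹ ^ m * heat s x) (Set.Ioo 0 t) := by
  have ha : 0 < x ^ 2 / 4 := by positivity
  refine Integrable.mono' ((sqrt_inv_integrable t ht).const_mul (m.factorial / (x ^ 2 / 4) ^ m))
    (heat_meas m x).aestronglyMeasurable ?_
  filter_upwards [ae_restrict_mem measurableSet_Ioo] with s hs
  exact heat_bound m _ s x ha hs.1 (by linarith)

theorem heat_integrable0 (x t : ℝ) (ht : 0 < t) :
    IntegrableOn (fun s : ℝ => heat s x) (Set.Ioo 0 t) := by
  have hm := heat_meas 0 x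
  simp only [pow_zero, one_mul] at hm
  refine Integrable.mono' (sqrt_inv_integrable t ht) hm.aestronglyMeasurable ?_
  filter_upwards [ae_restrict_mem measurableSet_Ioo] with s hs
  have hs0 : 0 < s := hs.1
  unfold heat
  rw [Real.norm_of_nonneg (by positivity)]
  apply mul_le_of_le_one_right (by positivity)
  apply Real.exp_le_one_iff.mpr
  rw [neg_div]
  have : 0 ≤ x ^ 2 / (4 * s) := by positivity
  linarith

noncomputable def heatJ (t : ℝ) (m : ℕ) (u : ℝ) : ℝ := ∫ s in Set.Ioo 0 t, s⁻¹ ^ m * heat s u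

theorem heatJ_hasDerivAt (t : ℝ) (ht : 0 < t) (m : ℕ) (u : ℝ) (hu : u ≠ 0) :
    HasDerivAt (heatJ t m) (-(u / 2) * heatJ t (m + 1) u) u := by
  have ha : 0 < u ^ 2 / 16 := by positivity
  have hu' : 0 < |u| := abs_pos.mpr hu
  have key := (hasDerivAt_integral_of_dominated_loc_of_deriv_le
    (μ := volume.restrict (Set.Ioo 0 t)) (x₀ := u) (s := Metric.ball u (|u| / 2))
    (F := fun x s => s⁻¹ ^ m * heat s x)
    (F' := fun x s => -(x / 2) * (s⁻¹ ^ (m + 1) * heat s x))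
    (bound := fun s => |u| * (((m + 1).factorial / (u ^ 2 / 16) ^ (m + 1)) *
      (Real.sqrt (4 * Real.pi * s))⁻¹))
    (Metric.ball_mem_nhds _ (by positivity))
    (Eventually.of_forall fun x => (heat_meas m x).aestronglyMeasurable)
    (heat_integrable m u t ht hu)
    ((heat_meas (m + 1) u).const_mul _).aestronglyMeasurable
    ?_ (((sqrt_inv_integrable t ht).const_mul _).const_mul _) ?_).2
  · simp only [integral_const_mul] at key
    exact key
  · filter_upwards [ae_restrict_mem measurableSet_Ioo] with s hs x hx
    rw [Metric.mem_ball, Real.dist_eq] at hx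
    have hx1 : |u| - |x| ≤ |x - u| := by
      rw [abs_sub_comm]; exact abs_sub_abs_le_abs_sub u x
    have hx2 : |x| - |u| ≤ |x - u| := abs_sub_abs_le_abs_sub x u
    rw [norm_mul]
    refine mul_le_mul ?_ (heat_bound (m + 1) _ s x ha hs.1 ?_) (norm_nonneg _) (abs_nonneg _)
    · rw [Real.norm_eq_abs, abs_neg, abs_div, abs_two]; linarith
    · rw [← sq_abs u, ← sq_abs x]; nlinarith
  · filter_upwards [ae_restrict_mem measurableSet_Ioo] with s hs x hx
    have hs0 : s ≠ 0 := hs.1.ne'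
    have h1 : HasDerivAt (fun x : ℝ => -(x ^ 2) / (4 * s)) (-(2 * x) / (4 * s)) x := by
      simpa using ((hasDerivAt_pow 2 x).neg.div_const (4 * s))
    have h2 := (h1.exp.const_mul ((Real.sqrt (4 * Real.pi * s))⁻¹)).const_mul (s⁻¹ ^ m)
    unfold heat
    refine h2.congr_deriv ?_
    have h3 : -(2 * x) / (4 * s) = -(x / 2) * s⁻¹ := by
      rw [div_eq_mul_inv, mul_inv]; ring
    rw [pow_succ, h3]
    ring

theorem heatJ_contDiffOn (t : ℝ) (ht : 0 < t) (n : ℕ) :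
    ∀ m : ℕ, ContDiffOn ℝ n (heatJ t m) {u | u ≠ 0} := by
  induction n with
  | zero =>
    intro m
    rw [Nat.cast_zero, contDiffOn_zero]
    exact fun u hu => (heatJ_hasDerivAt t ht m u hu).continuousAt.continuousWithinAt
  | succ n ih =>
    intro m
    rw [Nat.cast_succ, contDiffOn_succ_iff_deriv_of_isOpen isOpen_ne]
    refine ⟨fun u hu => (heatJ_hasDerivAt t ht m u hu).differentiableAt.differentiableWithinAt,
      by simp, ?_⟩
    have h : ContDiffOn ℝ n (fun u => -(u / 2) * heatJ t (m + 1) u) {u | u ≠ 0} :=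
      ((contDiff_id.div_const 2).neg.contDiffOn).mul (ih (m + 1))
    exact h.congr fun u hu => (heatJ_hasDerivAt t ht m u hu).deriv

/-- For every `t > 0`, the function `u ↦ ∫₀^t (1 − φ(u))·h_s(u) ds` is well defined for
every `u` (the integrand is absolutely integrable in `s` on `(0, t)`), vanishes on the
neighborhood `{|u| < δ}` of `0` where `φ ≡ 1`, and is `C^∞` on all of `ℝ`. -/
theorem stmt5 (φ : ℝ → ℝ) (hφ : ContDiff ℝ (⊤ : ℕ∞) φ) (hsupp : HasCompactSupport φ)
    (heven : ∀ x, φ (-x) = φ x) (δ : ℝ) (hδ : 0 < δ) (hone : ∀ x, |x| < δ → φ x = 1)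
    (t : ℝ) (ht : 0 < t) :
    (∀ u : ℝ, IntegrableOn (fun s => (1 - φ u) * heat s u) (Set.Ioo 0 t)) ∧
    (∀ u : ℝ, |u| < δ → (∫ s in Set.Ioo 0 t, (1 - φ u) * heat s u) = 0) ∧
    ContDiff ℝ (⊤ : ℕ∞) (fun u => ∫ s in Set.Ioo 0 t, (1 - φ u) * heat s u) := by
  refine ⟨fun u => (heat_integrable0 u t ht).const_mul _, ?_, ?_⟩
  · intro u hu
    simp [hone u hu]
  · rw [contDiff_iff_contDiffAt]
    intro u
    by_cases hu : |u| < δ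
    · have h0 : ContDiffAt ℝ (⊤ : ℕ∞) (fun _ : ℝ => (0 : ℝ)) u := contDiffAt_const
      refine h0.congr_of_eventuallyEq ?_
      filter_upwards [(isOpen_lt continuous_abs continuous_const).mem_nhds hu] with x hx
      simp [hone x hx]
    · have hu0 : u ≠ 0 := by
        rintro rfl
        simp [hδ] at hu
      have hJ : ContDiffOn ℝ (⊤ : ℕ∞) (heatJ t 0) {u | u ≠ 0} :=
        contDiffOn_infty.mpr fun n => heatJ_contDiffOn t ht n 0
      have hJu := hJ.contDiffAt (isOpen_ne.mem_nhds hu0)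
      have h := ((contDiff_const (c := (1 : ℝ))).sub hφ).contDiffAt.mul hJu
      refine h.congr_of_eventuallyEq (Eventually.of_forall fun x => ?_)
      simp [heatJ, integral_const_mul]
end

section
/- For every Λ > 0 and every (x, y) with x ≥ 0 and y ≥ 0 (including points on the diagonal x = y), the limit lim_{ε→0⁺} ρ_{ε,Λ}(x, y) exists. -/
open MeasureTheory Topology Filter

/-- The scalar propagator kernel
`ρ_{ε,Λ}(x, y) = −(1/2) ∫_ε^Λ [(φh_t)′(x − y) + (φh_t)′(x + y)] dt`. -/
noncomputable def rho (φ : ℝ → ℝ) (ε Λ x y : ℝ) : ℝ :=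
  -(1 / 2) * ∫ t in ε..Λ, (phiHeat' φ t (x - y) + phiHeat' φ t (x + y))

/-- `ρ̄_Λ(x, y) = lim_{ε→0⁺} ρ_{ε,Λ}(x, y)` (whenever the limit exists). -/
noncomputable def rhoBar (φ : ℝ → ℝ) (Λ x y : ℝ) : ℝ :=
  limUnder (𝓝[>] (0 : ℝ)) (fun ε => rho φ ε Λ x y)

lemma sqrt_inv_ii (Λ : ℝ) :
    IntervalIntegrable (fun t : ℝ => (Real.sqrt (4 * Real.pi * t))⁻¹) volume 0 Λ := by
  have h := (intervalIntegral.intervalIntegrable_rpow' (a := 0) (b := Λ) (r := -(1/2))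
    (by norm_num)).const_mul (Real.sqrt (4 * Real.pi))⁻¹
  have e : ∀ t : ℝ, 0 ≤ t → (Real.sqrt (4 * Real.pi))⁻¹ * t ^ (-(1/2) : ℝ)
      = (Real.sqrt (4 * Real.pi * t))⁻¹ := by
    intro t ht
    rw [Real.sqrt_mul (show 0 ≤ 4 * Real.pi by positivity), Real.rpow_neg ht, ← Real.sqrt_eq_rpow, mul_inv]
  rcases le_total 0 Λ with hΛ | hΛ
  · refine h.congr ?_
    intro t ht
    rw [Set.uIoc_of_le hΛ] at ht
    exact e t ht.1.le
  · refine (IntervalIntegrable.refl (f := fun t : ℝ => (0:ℝ)) (a := 0) |>.trans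
      (intervalIntegrable_const (c := (0:ℝ)) (b := Λ))).congr ?_
    intro t ht
    rw [Set.uIoc_of_ge hΛ] at ht
    have : 4 * Real.pi * t ≤ 0 := mul_nonpos_of_nonneg_of_nonpos (by positivity) ht.2
    simp [Real.sqrt_eq_zero_of_nonpos this]

lemma heat_bound_s6 {t : ℝ} (ht : 0 < t) (u : ℝ) :
    |heat t u| ≤ (Real.sqrt (4 * Real.pi * t))⁻¹ := by
  unfold heat
  rw [abs_of_nonneg (by positivity)]
  refine mul_le_of_le_one_right (by positivity) ?_
  rw [Real.exp_le_one_iff, neg_div]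
  have : 0 ≤ u ^ 2 / (4 * t) := by positivity
  linarith

lemma heat'_bound {t : ℝ} (ht : 0 < t) (u : ℝ) :
    |heat' t u| ≤ 2 / |u| * (Real.sqrt (4 * Real.pi * t))⁻¹ := by
  rcases eq_or_ne u 0 with rfl | hu
  · simp [heat']
  unfold heat' heat
  have hu' : 0 < |u| := abs_pos.mpr hu
  have ha : 0 < u ^ 2 / (4 * t) := by positivity
  have h1 : Real.exp (-(u ^ 2) / (4 * t)) ≤ (u ^ 2 / (4 * t))⁻¹ := by
    rw [neg_div, Real.exp_neg]
    exact inv_anti₀ ha (by linarith [Real.add_one_le_exp (u ^ 2 / (4 * t))])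
  have hs : 0 ≤ (Real.sqrt (4 * Real.pi * t))⁻¹ := by positivity
  rw [abs_mul, abs_neg, abs_div, abs_of_pos (show 0 < 2 * t by positivity),
    abs_mul, abs_of_nonneg hs, abs_of_pos (Real.exp_pos _)]
  calc _ ≤ |u| / (2 * t) * ((Real.sqrt (4 * Real.pi * t))⁻¹ * (u ^ 2 / (4 * t))⁻¹) := by gcongr
    _ = (|u| / (2 * t) * (u ^ 2 / (4 * t))⁻¹) * (Real.sqrt (4 * Real.pi * t))⁻¹ := by ring
    _ = _ := by
      congr 1
      rw [← sq_abs u]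
      field_simp
      norm_num

lemma phiHeat'_ii (φ : ℝ → ℝ) (u : ℝ) {Λ : ℝ} (hΛ : 0 < Λ) :
    IntervalIntegrable (fun t => phiHeat' φ t u) volume 0 Λ := by
  have h := (sqrt_inv_ii Λ).const_mul (|deriv φ u| + |φ u| * (2 / |u|))
  refine h.mono_fun ?_ ?_
  · refine Measurable.aestronglyMeasurable ?_
    unfold phiHeat' heat' heat
    fun_prop
  · rw [Filter.EventuallyLE, ae_restrict_iff' measurableSet_uIoc]
    refine Filter.Eventually.of_forall fun t ht => ?_
    rw [Set.uIoc_of_le hΛ.le] at ht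
    refine le_trans ?_ (le_abs_self _)
    rw [Real.norm_eq_abs]
    unfold phiHeat'
    refine (abs_add_le _ _).trans ?_
    rw [abs_mul, abs_mul, add_mul, mul_assoc |φ u|]
    have := heat_bound_s6 ht.1 u
    have := heat'_bound ht.1 u
    gcongr

/-- For every `Λ > 0` and every `x, y ≥ 0` (including the diagonal), the limit
`lim_{ε→0⁺} ρ_{ε,Λ}(x, y)` exists. -/
theorem stmt6 (φ : ℝ → ℝ) (hφ : ContDiff ℝ (⊤ : ℕ∞) φ) (hsupp : HasCompactSupport φ)
    (heven : ∀ x, φ (-x) = φ x) (δ : ℝ) (hδ : 0 < δ) (hone : ∀ x, |x| < δ → φ x = 1)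
    (Λ : ℝ) (hΛ : 0 < Λ) (x y : ℝ) (hx : 0 ≤ x) (hy : 0 ≤ y) :
    ∃ l : ℝ, Tendsto (fun ε => rho φ ε Λ x y) (𝓝[>] (0 : ℝ)) (𝓝 l) := by
  have hi : IntervalIntegrable (fun t => phiHeat' φ t (x - y) + phiHeat' φ t (x + y))
      volume 0 Λ := (phiHeat'_ii φ (x - y) hΛ).add (phiHeat'_ii φ (x + y) hΛ)
  have hc := intervalIntegral.continuousOn_primitive_interval_left
    ((intervalIntegrable_iff' (by simp)).1 hi)
  have h0 := (hc 0 Set.left_mem_uIcc).tendsto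
  refine ⟨_, Tendsto.const_mul (-(1 / 2)) (h0.mono_left ?_)⟩
  rw [Set.uIcc_of_le hΛ.le, nhdsWithin_Icc_eq_nhdsGE hΛ]
  exact nhdsWithin_mono _ Set.Ioi_subset_Ici_self
end

section
/- For every Λ > 0 there exists a C^∞ function r : ℝ² → ℝ such that r(x, y) = ρ̄_Λ(x, y) for all (x, y) with 0 ≤ x < y, and likewise a C^∞ function r̃ : ℝ² → ℝ such that r̃(x, y) = ρ̄_Λ(x, y) for all (x, y) with 0 ≤ y < x. That is, the ε → 0 limit of the propagator kernel, defined off the diagonal in ℝ_{≥0}², extends smoothly to each of the two closed sectors {0 ≤ x ≤ y} and {0 ≤ y ≤ x}. -/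
open MeasureTheory Topology Filter

noncomputable def erfE (s : ℝ) : ℝ := ∫ v in (0:ℝ)..s, Real.exp (-1 * v ^ 2)

lemma erfE_hasDeriv (s : ℝ) : HasDerivAt erfE (Real.exp (-1 * s ^ 2)) s := by
  have hc : Continuous (fun v : ℝ => Real.exp (-1 * v ^ 2)) := by fun_prop
  exact intervalIntegral.integral_hasDerivAt_right (hc.intervalIntegrable _ _)
    (hc.stronglyMeasurableAtFilter _ _) hc.continuousAt

lemma erfE_contDiff : ContDiff ℝ (⊤ : ℕ∞) erfE := by
  rw [contDiff_infty_iff_deriv]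
  refine ⟨fun s => (erfE_hasDeriv s).differentiableAt, ?_⟩
  have : deriv erfE = fun s => Real.exp (-1 * s ^ 2) := funext fun s => (erfE_hasDeriv s).deriv
  rw [this]
  fun_prop

lemma erfE_tendsto : Tendsto erfE atTop (𝓝 (Real.sqrt Real.pi / 2)) := by
  have h := intervalIntegral_tendsto_integral_Ioi (μ := volume) (f := fun v : ℝ => Real.exp (-1 * v ^ 2)) 0
    (integrable_exp_neg_mul_sq (b := 1) one_pos).integrableOn tendsto_id
  rw [integral_gaussian_Ioi, div_one] at h
  exact h

/-- antiderivative of `heat'` in `t` -/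
noncomputable def antiB (t u : ℝ) : ℝ := (Real.sqrt Real.pi)⁻¹ * erfE (u / (2 * Real.sqrt t))

/-- antiderivative of `heat` in `t` -/
noncomputable def antiA (t u : ℝ) : ℝ :=
  (Real.sqrt Real.pi)⁻¹ * (Real.sqrt t * Real.exp (-(u ^ 2) / (4 * t))) + u * antiB t u

lemma sqrt4 (t : ℝ) : Real.sqrt (4 * Real.pi * t) = 2 * Real.sqrt Real.pi * Real.sqrt t := by
  rw [Real.sqrt_mul (by positivity), Real.sqrt_mul (by norm_num)]
  congr 2
  rw [show (4:ℝ) = 2 ^ 2 by norm_num, Real.sqrt_sq (by norm_num)]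

lemma antiB_deriv (t u : ℝ) (ht : 0 < t) : HasDerivAt (fun t => antiB t u) (heat' t u) t := by
  have hs : 0 < Real.sqrt t := Real.sqrt_pos.2 ht
  have hp : 0 < Real.sqrt Real.pi := Real.sqrt_pos.2 Real.pi_pos
  have h1 : HasDerivAt (fun t => u / (2 * Real.sqrt t)) _ t :=
    (hasDerivAt_const t u).div ((Real.hasDerivAt_sqrt ht.ne').const_mul 2) (by positivity)
  have h2 := ((erfE_hasDeriv _).comp t h1).const_mul (Real.sqrt Real.pi)⁻¹
  refine h2.congr_deriv ?_
  have he : -1 * (u / (2 * Real.sqrt t)) ^ 2 = -(u ^ 2) / (4 * t) := by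
    rw [div_pow, mul_pow, Real.sq_sqrt ht.le]; ring
  rw [he]
  unfold heat' heat
  rw [sqrt4]
  obtain ⟨s, hs', rfl⟩ : ∃ s : ℝ, 0 < s ∧ t = s ^ 2 := ⟨_, hs, (Real.sq_sqrt ht.le).symm⟩
  rw [Real.sqrt_sq hs'.le]
  generalize Real.exp _ = e
  field_simp
  ring

lemma antiA_deriv (t u : ℝ) (ht : 0 < t) : HasDerivAt (fun t => antiA t u) (heat t u) t := by
  have hs : 0 < Real.sqrt t := Real.sqrt_pos.2 ht
  have hp : 0 < Real.sqrt Real.pi := Real.sqrt_pos.2 Real.pi_pos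
  have h1 : HasDerivAt (fun t : ℝ => -(u ^ 2) / (4 * t)) _ t :=
    (hasDerivAt_const t (-(u ^ 2))).div ((hasDerivAt_id t).const_mul 4) (by simp; positivity)
  have h2 := (((Real.hasDerivAt_sqrt ht.ne').mul h1.exp).const_mul (Real.sqrt Real.pi)⁻¹).add
    ((antiB_deriv t u ht).const_mul u)
  refine h2.congr_deriv ?_
  unfold heat' heat
  rw [sqrt4]
  obtain ⟨s, hs', rfl⟩ : ∃ s : ℝ, 0 < s ∧ t = s ^ 2 := ⟨_, hs, (Real.sq_sqrt ht.le).symm⟩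
  rw [Real.sqrt_sq hs'.le]
  generalize Real.exp _ = e
  field_simp
  ring

lemma antiB_tendsto (u : ℝ) (hu : 0 < u) : Tendsto (fun t => antiB t u) (𝓝[>] 0) (𝓝 (1 / 2)) := by
  have hp : 0 < Real.sqrt Real.pi := Real.sqrt_pos.2 Real.pi_pos
  have h0 : Tendsto (fun t : ℝ => 2 * Real.sqrt t) (𝓝[>] 0) (𝓝[>] 0) := by
    refine tendsto_nhdsWithin_iff.2 ⟨?_, ?_⟩
    · have : Continuous (fun t : ℝ => 2 * Real.sqrt t) := by fun_prop
      have := this.tendsto 0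
      simp only [Real.sqrt_zero, mul_zero] at this
      exact this.mono_left nhdsWithin_le_nhds
    · filter_upwards [self_mem_nhdsWithin] with t ht
      have := Real.sqrt_pos.2 ht
      exact Set.mem_Ioi.2 (by positivity)
  have h1 : Tendsto (fun t : ℝ => u / (2 * Real.sqrt t)) (𝓝[>] 0) atTop := by
    simp only [div_eq_mul_inv]
    exact (tendsto_inv_nhdsGT_zero.comp h0).const_mul_atTop hu
  have h2 := (erfE_tendsto.comp h1).const_mul (Real.sqrt Real.pi)⁻¹
  have : (Real.sqrt Real.pi)⁻¹ * (Real.sqrt Real.pi / 2) = 1 / 2 := by field_simp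
  rw [this] at h2
  exact h2

lemma antiA_tendsto (u : ℝ) (hu : 0 < u) : Tendsto (fun t => antiA t u) (𝓝[>] 0) (𝓝 (u / 2)) := by
  have h1 : Tendsto (fun t : ℝ => Real.sqrt t * Real.exp (-(u ^ 2) / (4 * t))) (𝓝[>] 0) (𝓝 0) := by
    have hs : Tendsto Real.sqrt (𝓝[>] 0) (𝓝 0) := by
      have := Real.continuous_sqrt.tendsto 0
      rw [Real.sqrt_zero] at this
      exact this.mono_left nhdsWithin_le_nhds
    refine tendsto_of_tendsto_of_tendsto_of_le_of_le' tendsto_const_nhds hs ?_ ?_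
    · exact Eventually.of_forall fun t => by positivity
    · filter_upwards [self_mem_nhdsWithin] with t ht
      have ht' : (0:ℝ) < t := ht
      refine mul_le_of_le_one_right (Real.sqrt_nonneg t) (Real.exp_le_one_iff.2 ?_)
      exact div_nonpos_of_nonpos_of_nonneg (by nlinarith) (by positivity)
  have h2 := (h1.const_mul (Real.sqrt Real.pi)⁻¹).add ((antiB_tendsto u hu).const_mul u)
  have e : (Real.sqrt Real.pi)⁻¹ * 0 + u * (1 / 2) = u / 2 := by ring
  rw [e] at h2
  exact h2

/-- the limiting integral for `u > 0`, smooth in `u` -/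
noncomputable def limG (φ : ℝ → ℝ) (Λ u : ℝ) : ℝ :=
  deriv φ u * (antiA Λ u - u / 2) + φ u * (antiB Λ u - 1 / 2)

lemma limG_contDiff (φ : ℝ → ℝ) (hφ : ContDiff ℝ (⊤ : ℕ∞) φ) (Λ : ℝ) :
    ContDiff ℝ (⊤ : ℕ∞) (limG φ Λ) := by
  have hd : ContDiff ℝ (⊤ : ℕ∞) (deriv φ) := (contDiff_infty_iff_deriv.1 hφ).2
  have hB : ContDiff ℝ (⊤ : ℕ∞) (fun u => antiB Λ u) := by
    unfold antiB
    exact contDiff_const.mul (erfE_contDiff.comp (contDiff_id.div_const _))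
  have hA : ContDiff ℝ (⊤ : ℕ∞) (fun u => antiA Λ u) := by
    unfold antiA
    refine ContDiff.add ?_ (contDiff_id.mul hB)
    exact contDiff_const.mul (contDiff_const.mul ((contDiff_id.pow 2).neg.div_const _).exp)
  unfold limG
  exact (hd.mul (hA.sub (contDiff_id.div_const _))).add (hφ.mul (hB.sub contDiff_const))

lemma phiHeat_contOn (φ : ℝ → ℝ) (u : ℝ) :
    ContinuousOn (fun t => phiHeat' φ t u) (Set.Ioi 0) := by
  intro t ht
  have ht' : (0:ℝ) < t := ht
  have : Real.sqrt (4 * Real.pi * t) ≠ 0 := by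
    have := Real.pi_pos
    positivity
  apply ContinuousAt.continuousWithinAt
  unfold phiHeat' heat' heat
  have h2 : 2 * t ≠ 0 := by positivity
  have h4 : 4 * t ≠ 0 := by positivity
  fun_prop (disch := assumption)

lemma phiHeat_intble (φ : ℝ → ℝ) (u ε Λ : ℝ) (hε : 0 < ε) (hΛ : 0 < Λ) :
    IntervalIntegrable (fun t => phiHeat' φ t u) volume ε Λ := by
  refine ((phiHeat_contOn φ u).mono ?_).intervalIntegrable
  intro t ht
  exact lt_of_lt_of_le (lt_min hε hΛ) ht.1

lemma phiHeat_tendsto (φ : ℝ → ℝ) (u Λ : ℝ) (hu : 0 < u) (hΛ : 0 < Λ) :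
    Tendsto (fun ε => ∫ t in ε..Λ, phiHeat' φ t u) (𝓝[>] 0) (𝓝 (limG φ Λ u)) := by
  have h := ((tendsto_const_nhds (x := antiA Λ u)).sub (antiA_tendsto u hu)).const_mul (deriv φ u)
  have h' := ((tendsto_const_nhds (x := antiB Λ u)).sub (antiB_tendsto u hu)).const_mul (φ u)
  refine (h.add h').congr' ?_
  filter_upwards [self_mem_nhdsWithin] with ε hε
  have hε' : (0:ℝ) < ε := hε
  rw [intervalIntegral.integral_eq_sub_of_hasDerivAt
    (f := fun t => deriv φ u * antiA t u + φ u * antiB t u) ?_ (phiHeat_intble φ u ε Λ hε' hΛ)]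
  · ring
  · intro t ht
    have ht' : 0 < t := lt_of_lt_of_le (lt_min hε' hΛ) ht.1
    exact ((antiA_deriv t u ht').const_mul _).add ((antiB_deriv t u ht').const_mul _)

lemma phiHeat_odd (φ : ℝ → ℝ) (heven : ∀ x, φ (-x) = φ x) (t u : ℝ) :
    phiHeat' φ t (-u) = -phiHeat' φ t u := by
  have hd : deriv φ (-u) = -deriv φ u := by
    have h := deriv_comp_neg φ u
    have : (fun x => φ (-x)) = φ := funext heven
    rw [this] at h
    rw [h, neg_neg]
  unfold phiHeat' heat' heat
  rw [hd, heven, neg_sq]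
  ring

lemma rhoBar_eq (φ : ℝ → ℝ) (Λ x y a b : ℝ) (hΛ : 0 < Λ)
    (ha : Tendsto (fun ε => ∫ t in ε..Λ, phiHeat' φ t (x - y)) (𝓝[>] 0) (𝓝 a))
    (hb : Tendsto (fun ε => ∫ t in ε..Λ, phiHeat' φ t (x + y)) (𝓝[>] 0) (𝓝 b)) :
    rhoBar φ Λ x y = -(1 / 2) * (a + b) := by
  refine Tendsto.limUnder_eq ?_
  refine ((ha.add hb).const_mul (-(1 / 2))).congr' ?_
  filter_upwards [self_mem_nhdsWithin] with ε hε
  unfold rho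
  rw [intervalIntegral.integral_add (phiHeat_intble φ _ ε Λ hε hΛ) (phiHeat_intble φ _ ε Λ hε hΛ)]

/-- The `ε → 0` limit `ρ̄_Λ` of the propagator kernel extends smoothly to each of the
two closed sectors `{0 ≤ x ≤ y}` and `{0 ≤ y ≤ x}`: there are `C^∞` functions
`r, r̃ : ℝ² → ℝ` agreeing with `ρ̄_Λ` on `{0 ≤ x < y}` and `{0 ≤ y < x}` respectively. -/
theorem stmt7 (φ : ℝ → ℝ) (hφ : ContDiff ℝ (⊤ : ℕ∞) φ) (hsupp : HasCompactSupport φ)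
    (heven : ∀ x, φ (-x) = φ x) (δ : ℝ) (hδ : 0 < δ) (hone : ∀ x, |x| < δ → φ x = 1)
    (Λ : ℝ) (hΛ : 0 < Λ) :
    (∃ r : ℝ × ℝ → ℝ, ContDiff ℝ (⊤ : ℕ∞) r ∧
      ∀ x y : ℝ, 0 ≤ x → x < y → r (x, y) = rhoBar φ Λ x y) ∧
    (∃ rt : ℝ × ℝ → ℝ, ContDiff ℝ (⊤ : ℕ∞) rt ∧
      ∀ x y : ℝ, 0 ≤ y → y < x → rt (x, y) = rhoBar φ Λ x y) := by
  have hG := limG_contDiff φ hφ Λ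
  refine ⟨⟨fun p => -(1 / 2) * (-limG φ Λ (p.2 - p.1) + limG φ Λ (p.1 + p.2)), ?_, ?_⟩,
    ⟨fun p => -(1 / 2) * (limG φ Λ (p.1 - p.2) + limG φ Λ (p.1 + p.2)), ?_, ?_⟩⟩
  · exact contDiff_const.mul ((hG.comp (contDiff_snd.sub contDiff_fst)).neg.add
      (hG.comp (contDiff_fst.add contDiff_snd)))
  · intro x y hx hxy
    refine (rhoBar_eq φ Λ x y _ _ hΛ ?_ (phiHeat_tendsto φ _ Λ (by linarith) hΛ)).symm
    have h := (phiHeat_tendsto φ (y - x) Λ (by linarith) hΛ).neg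
    refine h.congr fun ε => ?_
    rw [← intervalIntegral.integral_neg]
    congr 1
    funext t
    rw [← phiHeat_odd φ heven, neg_sub]
  · exact contDiff_const.mul ((hG.comp (contDiff_fst.sub contDiff_snd)).add
      (hG.comp (contDiff_fst.add contDiff_snd)))
  · intro x y hy hxy
    exact (rhoBar_eq φ Λ x y _ _ hΛ (phiHeat_tendsto φ _ Λ (by linarith) hΛ)
      (phiHeat_tendsto φ _ Λ (by linarith) hΛ)).symm
end

section
/- For every Λ > 0 and every x > 0: the limit lim_{ε→0⁺} ρ_{ε,Λ}(x, x) exists, the two one-sided limits A₁ = lim_{(x′,y′)→(x,x), 0 ≤ x′ < y′} ρ̄_Λ(x′, y′) and A₂ = lim_{(x′,y′)→(x,x), 0 ≤ y′ < x′} ρ̄_Λ(x′, y′) exist, and lim_{ε→0⁺} ρ_{ε,Λ}(x, x) = (A₁ + A₂)/2. -/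
open MeasureTheory Topology Filter

lemma aux_meas (φ : ℝ → ℝ) (u : ℝ) : Measurable (fun t => phiHeat' φ t u) := by
  unfold phiHeat' heat' heat
  fun_prop

lemma aux_K (Λ : ℝ) (hΛ : 0 < Λ) :
    IntervalIntegrable (fun t => (Real.sqrt (4 * Real.pi * t))⁻¹) volume 0 Λ := by
  have h : IntervalIntegrable (fun t : ℝ => (Real.sqrt (4 * Real.pi))⁻¹ * t ^ (-(1/2) : ℝ)) volume 0 Λ :=
    (intervalIntegral.intervalIntegrable_rpow' (by norm_num)).const_mul _
  refine h.congr (fun t ht => ?_)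
  rw [Set.uIoc_of_le hΛ.le] at ht
  rw [Real.sqrt_mul (x := 4 * Real.pi) (by positivity) t, Real.rpow_neg ht.1.le, ← Real.sqrt_eq_rpow, mul_inv]

lemma aux_heat (t u : ℝ) : |heat t u| ≤ (Real.sqrt (4 * Real.pi * t))⁻¹ ∨ t ≤ 0 := by
  by_cases ht : t ≤ 0
  · exact Or.inr ht
  push Not at ht
  left
  unfold heat
  rw [abs_of_nonneg (by positivity)]
  apply mul_le_of_le_one_right (by positivity)
  rw [Real.exp_le_one_iff, neg_div]
  have : 0 ≤ u ^ 2 / (4 * t) := by positivity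
  linarith

lemma aux_heat' (t u : ℝ) (ht : 0 < t) (hu : u ≠ 0) :
    |heat' t u| ≤ 2 / |u| * (Real.sqrt (4 * Real.pi * t))⁻¹ := by
  unfold heat' heat
  rw [abs_mul, abs_neg, abs_div, abs_of_pos (show 0 < 2 * t by positivity),
    abs_of_nonneg (a := _ * Real.exp _) (by positivity)]
  have hu' : 0 < |u| := abs_pos.mpr hu
  have h1 : Real.exp (-(u ^ 2) / (4 * t)) ≤ 4 * t / |u| ^ 2 := by
    have h2 : 0 < u ^ 2 / (4 * t) := by positivity
    have h3 := Real.add_one_le_exp (u ^ 2 / (4 * t))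
    rw [neg_div, Real.exp_neg, sq_abs]
    have : 4 * t / u ^ 2 = (u ^ 2 / (4 * t))⁻¹ := by rw [inv_div]
    rw [this]
    apply inv_anti₀ h2
    linarith
  calc _ ≤ |u| / (2 * t) * ((Real.sqrt (4 * Real.pi * t))⁻¹ * (4 * t / |u| ^ 2)) := by gcongr
    _ = _ := by field_simp; ring

lemma aux_bound (φ : ℝ → ℝ) (t u : ℝ) (ht : 0 < t) (hu : u ≠ 0) :
    |phiHeat' φ t u| ≤ (|deriv φ u| + |φ u| * (2 / |u|)) * (Real.sqrt (4 * Real.pi * t))⁻¹ := by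
  unfold phiHeat'
  have h1 := (aux_heat t u).resolve_right (by linarith)
  have h2 := aux_heat' t u ht hu
  calc _ ≤ |deriv φ u| * |heat t u| + |φ u| * |heat' t u| := by
        rw [← abs_mul, ← abs_mul]; exact abs_add_le _ _
    _ ≤ |deriv φ u| * (Real.sqrt (4 * Real.pi * t))⁻¹
        + |φ u| * (2 / |u| * (Real.sqrt (4 * Real.pi * t))⁻¹) := by gcongr
    _ = _ := by ring

lemma aux_int_s9 (φ : ℝ → ℝ) (Λ u : ℝ) (hΛ : 0 < Λ) (h0 : deriv φ 0 = 0) :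
    IntervalIntegrable (fun t => phiHeat' φ t u) volume 0 Λ := by
  by_cases hu : u = 0
  · have : (fun t => phiHeat' φ t u) = fun _ => 0 := by
      funext t; simp [phiHeat', heat', hu, h0]
    rw [this]; simp
  refine ((aux_K Λ hΛ).const_mul (|deriv φ u| + |φ u| * (2 / |u|))).mono_fun
    (aux_meas φ u).aestronglyMeasurable ?_
  rw [Set.uIoc_of_le hΛ.le]
  filter_upwards [ae_restrict_mem measurableSet_Ioc] with t ht
  rw [Real.norm_eq_abs, Real.norm_eq_abs]
  exact (aux_bound φ t u ht.1 hu).trans (le_abs_self _)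

noncomputable def auxG (φ : ℝ → ℝ) (Λ u : ℝ) : ℝ := ∫ t in (0:ℝ)..Λ, phiHeat' φ t u

lemma aux_rho (φ : ℝ → ℝ) (Λ x y : ℝ) (hΛ : 0 < Λ) (h0 : deriv φ 0 = 0) :
    Tendsto (fun ε => rho φ ε Λ x y) (𝓝[>] (0 : ℝ))
      (𝓝 (-(1/2) * (auxG φ Λ (x - y) + auxG φ Λ (x + y)))) := by
  unfold rho auxG
  rw [← intervalIntegral.integral_add (aux_int_s9 φ Λ _ hΛ h0) (aux_int_s9 φ Λ _ hΛ h0)]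
  apply Tendsto.const_mul
  have hi := (aux_int_s9 φ Λ (x - y) hΛ h0).add (aux_int_s9 φ Λ (x + y) hΛ h0)
  have hc := intervalIntegral.continuousOn_primitive_interval_left
    (μ := volume) (a := 0) (b := Λ)
    (f := fun t => phiHeat' φ t (x - y) + phiHeat' φ t (x + y)) (by
      rw [Set.uIcc_of_le hΛ.le, integrableOn_Icc_iff_integrableOn_Ioc]
      exact (intervalIntegrable_iff_integrableOn_Ioc_of_le hΛ.le).1 hi)
  have h2 := hc 0 Set.left_mem_uIcc
  rw [Set.uIcc_of_le hΛ.le] at h2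
  refine h2.tendsto.mono_left ?_
  rw [← nhdsWithin_Ioc_eq_nhdsGT hΛ]
  exact nhdsWithin_mono _ Set.Ioc_subset_Icc_self

lemma aux_rhoBar (φ : ℝ → ℝ) (Λ x y : ℝ) (hΛ : 0 < Λ) (h0 : deriv φ 0 = 0) :
    rhoBar φ Λ x y = -(1/2) * (auxG φ Λ (x - y) + auxG φ Λ (x + y)) :=
  (aux_rho φ Λ x y hΛ h0).limUnder_eq

lemma aux_cont (φ : ℝ → ℝ) (hφ : ContDiff ℝ (⊤ : ℕ∞) φ) (Λ u : ℝ) (hΛ : 0 < Λ) (hu : u ≠ 0) :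
    ContinuousAt (auxG φ Λ) u := by
  have hd : Continuous (deriv φ) := hφ.continuous_deriv (by simp)
  have hp : Continuous φ := hφ.continuous
  have hB : ContinuousAt (fun v => |deriv φ v| + |φ v| * (2 / |v|)) u := by
    have : |u| ≠ 0 := abs_ne_zero.mpr hu
    fun_prop (disch := assumption)
  have hev := hB.eventually_lt_const (lt_add_one _)
  have hne : ∀ᶠ v in 𝓝 u, v ≠ 0 := isOpen_ne.mem_nhds hu
  unfold auxG
  refine intervalIntegral.continuousAt_of_dominated_interval
    (bound := fun t => (|deriv φ u| + |φ u| * (2 / |u|) + 1) * (Real.sqrt (4 * Real.pi * t))⁻¹)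
    (.of_forall fun v => (aux_meas φ v).aestronglyMeasurable) ?_ ((aux_K Λ hΛ).const_mul _) ?_
  · filter_upwards [hev, hne] with v hv hv0
    refine .of_forall fun t ht => ?_
    rw [Set.uIoc_of_le hΛ.le] at ht
    rw [Real.norm_eq_abs]
    refine (aux_bound φ t v ht.1 hv0).trans ?_
    gcongr
  · refine .of_forall fun t ht => ?_
    unfold phiHeat' heat' heat
    fun_prop

lemma aux_Ioi : IntegrableOn (fun s => heat' s 1) (Set.Ioi 0) := by
  have hm : Measurable (fun s => heat' s 1) := by
    unfold heat' heat; fun_prop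
  rw [← Set.Ioc_union_Ioi_eq_Ioi (zero_le_one' ℝ)]
  refine IntegrableOn.union ?_ ?_
  · have h := ((intervalIntegrable_iff_integrableOn_Ioc_of_le zero_le_one).1
      (aux_K 1 one_pos)).const_mul 2
    refine Integrable.mono' h hm.aestronglyMeasurable ?_
    filter_upwards [ae_restrict_mem measurableSet_Ioc] with t ht
    have := aux_heat' t 1 ht.1 one_ne_zero
    rw [Real.norm_eq_abs]
    simpa using this
  · have h := (integrableOn_Ioi_rpow_of_lt (show (-(3/2) : ℝ) < -1 by norm_num) one_pos)
    refine Integrable.mono' h hm.aestronglyMeasurable ?_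
    filter_upwards [ae_restrict_mem measurableSet_Ioi] with t ht
    have ht : 1 < t := ht
    have ht0 : 0 < t := by linarith
    have h1 := (aux_heat t 1).resolve_right (by linarith)
    rw [Real.norm_eq_abs, heat', abs_mul, abs_neg, abs_of_pos (show 0 < 1 / (2 * t) by positivity)]
    have h2 : (Real.sqrt (4 * Real.pi * t))⁻¹ ≤ (Real.sqrt t)⁻¹ := by
      have : 0 < Real.sqrt t := Real.sqrt_pos.mpr ht0
      apply inv_anti₀ this
      apply Real.sqrt_le_sqrt
      nlinarith [Real.pi_gt_three]
    have h3 : t ^ (-(3/2) : ℝ) = t⁻¹ * (Real.sqrt t)⁻¹ := by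
      rw [show (-(3/2) : ℝ) = -1 + -(1/2) by norm_num, Real.rpow_add ht0, Real.rpow_neg ht0.le,
        Real.rpow_neg ht0.le, ← Real.sqrt_eq_rpow, Real.rpow_one]
    rw [h3]
    have h4 : 1 / (2 * t) ≤ t⁻¹ := by
      rw [one_div]; apply inv_anti₀ ht0; linarith
    exact mul_le_mul h4 (h1.trans h2) (abs_nonneg _) (by positivity)

lemma aux_scale (s u : ℝ) (hu : 0 < u) : u ^ 2 * heat' (u ^ 2 * s) u = heat' s 1 := by
  unfold heat' heat
  have h1 : Real.sqrt (4 * Real.pi * (u ^ 2 * s)) = u * Real.sqrt (4 * Real.pi * s) := by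
    rw [show 4 * Real.pi * (u ^ 2 * s) = u ^ 2 * (4 * Real.pi * s) by ring,
      Real.sqrt_mul (by positivity), Real.sqrt_sq hu.le]
  have h2 : -(u ^ 2) / (4 * (u ^ 2 * s)) = -(1 ^ 2) / (4 * s) := by
    rw [show 4 * (u ^ 2 * s) = u ^ 2 * (4 * s) by ring, show -(u^2) = u ^ 2 * (-(1^2)) by ring]
    exact mul_div_mul_left _ _ (by positivity)
  have h3 : u / (2 * (u ^ 2 * s)) = u⁻¹ * (1 / (2 * s)) := by
    by_cases hs : s = 0
    · simp [hs]
    field_simp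
  rw [h1, h2, h3, mul_inv]
  field_simp

lemma aux_right (φ : ℝ → ℝ) (δ : ℝ) (hδ : 0 < δ) (hone : ∀ x, |x| < δ → φ x = 1)
    (Λ : ℝ) (hΛ : 0 < Λ) :
    Tendsto (auxG φ Λ) (𝓝[>] 0) (𝓝 (∫ s in Set.Ioi (0:ℝ), heat' s 1)) := by
  have hlim : Tendsto (fun u : ℝ => Λ / u ^ 2) (𝓝[>] 0) atTop := by
    have h : Tendsto (fun u : ℝ => u ^ 2) (𝓝[>] 0) (𝓝[>] 0) := by
      refine tendsto_nhdsWithin_iff.2 ⟨?_, ?_⟩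
      · have : Tendsto (fun u : ℝ => u ^ 2) (𝓝 0) (𝓝 (0 ^ 2)) := by
          exact (continuous_pow 2).tendsto 0
        rw [zero_pow two_ne_zero] at this
        exact this.mono_left nhdsWithin_le_nhds
      · filter_upwards [self_mem_nhdsWithin] with u hu
        exact pow_pos (Set.mem_Ioi.1 hu) 2
    simp_rw [div_eq_mul_inv]
    exact (tendsto_inv_nhdsGT_zero.comp h).const_mul_atTop hΛ
  have h := intervalIntegral_tendsto_integral_Ioi 0 aux_Ioi hlim
  refine h.congr' ?_
  filter_upwards [Ioo_mem_nhdsGT hδ] with u hu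
  have hu0 : 0 < u := hu.1
  have hloc : φ =ᶠ[𝓝 u] fun _ => 1 := by
    have : ∀ᶠ v in 𝓝 u, |v| < δ :=
      (continuous_abs.tendsto u).eventually_lt_const (by rw [abs_of_pos hu0]; exact hu.2)
    filter_upwards [this] with v hv using hone v hv
  have e : ∀ t, phiHeat' φ t u = heat' t u := by
    intro t
    simp [phiHeat', hloc.deriv_eq, hloc.eq_of_nhds]
  unfold auxG
  simp_rw [e, ← aux_scale _ u hu0]
  rw [intervalIntegral.integral_const_mul,
    intervalIntegral.mul_integral_comp_mul_left (f := fun t => heat' t u)]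
  congr 1
  · simp
  · field_simp

lemma aux_odd (φ : ℝ → ℝ) (heven : ∀ x, φ (-x) = φ x) (Λ u : ℝ) :
    auxG φ Λ (-u) = - auxG φ Λ u := by
  have hd : deriv φ (-u) = - deriv φ u := by
    have h := deriv_comp_neg φ u
    rw [show (fun x => φ (-x)) = φ from funext heven] at h
    linarith
  unfold auxG
  rw [← intervalIntegral.integral_neg]
  congr 1
  funext t
  simp only [phiHeat', heat', heat, hd, heven, neg_sq]
  ring

/-- For `Λ > 0` and `x > 0`: the limit `lim_{ε→0⁺} ρ_{ε,Λ}(x, x)` exists, the two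
one-sided limits `A₁, A₂` of `ρ̄_Λ` at `(x, x)` from the sectors `{0 ≤ x′ < y′}` and
`{0 ≤ y′ < x′}` exist, and `lim_{ε→0⁺} ρ_{ε,Λ}(x, x) = (A₁ + A₂)/2`. -/
theorem stmt9 (φ : ℝ → ℝ) (hφ : ContDiff ℝ (⊤ : ℕ∞) φ) (hsupp : HasCompactSupport φ)
    (heven : ∀ x, φ (-x) = φ x) (δ : ℝ) (hδ : 0 < δ) (hone : ∀ x, |x| < δ → φ x = 1)
    (Λ : ℝ) (hΛ : 0 < Λ) (x : ℝ) (hx : 0 < x) :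
    ∃ A₁ A₂ : ℝ,
      Tendsto (fun p : ℝ × ℝ => rhoBar φ Λ p.1 p.2)
        (𝓝[{p : ℝ × ℝ | 0 ≤ p.1 ∧ p.1 < p.2}] (x, x)) (𝓝 A₁) ∧
      Tendsto (fun p : ℝ × ℝ => rhoBar φ Λ p.1 p.2)
        (𝓝[{p : ℝ × ℝ | 0 ≤ p.2 ∧ p.2 < p.1}] (x, x)) (𝓝 A₂) ∧
      Tendsto (fun ε => rho φ ε Λ x x) (𝓝[>] (0 : ℝ)) (𝓝 ((A₁ + A₂) / 2)) := by
  have h0 : deriv φ 0 = 0 := by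
    have h := deriv_comp_neg φ 0
    rw [show (fun x => φ (-x)) = φ from funext heven, neg_zero] at h
    linarith
  have hR := aux_right φ δ hδ hone Λ hΛ
  set L := ∫ s in Set.Ioi (0:ℝ), heat' s 1
  have hL : Tendsto (auxG φ Λ) (𝓝[<] 0) (𝓝 (-L)) := by
    have h1 : Tendsto (fun u : ℝ => -u) (𝓝[<] 0) (𝓝[>] 0) := by
      simpa using tendsto_neg_nhdsLT (a := (0:ℝ))
    refine ((hR.comp h1).neg).congr fun u => ?_
    simp [aux_odd φ heven]
  have hsum : ∀ S : Set (ℝ × ℝ), Tendsto (fun p : ℝ × ℝ => auxG φ Λ (p.1 + p.2)) (𝓝[S] (x, x))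
      (𝓝 (auxG φ Λ (x + x))) := fun S => by
    have hc : Tendsto (fun p : ℝ × ℝ => p.1 + p.2) (𝓝 (x, x)) (𝓝 (x + x)) :=
      (continuous_fst.add continuous_snd).tendsto (x, x)
    exact ((aux_cont φ hφ Λ (x + x) hΛ (by positivity)).tendsto.comp hc).mono_left
      nhdsWithin_le_nhds
  have hsub : ∀ S : Set (ℝ × ℝ), Tendsto (fun p : ℝ × ℝ => p.1 - p.2) (𝓝[S] (x, x)) (𝓝 0) :=
    fun S => by
    have hc : Tendsto (fun p : ℝ × ℝ => p.1 - p.2) (𝓝 (x, x)) (𝓝 (x - x)) :=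
      (continuous_fst.sub continuous_snd).tendsto (x, x)
    rw [sub_self] at hc
    exact hc.mono_left nhdsWithin_le_nhds
  refine ⟨-(1/2) * (-L + auxG φ Λ (x + x)), -(1/2) * (L + auxG φ Λ (x + x)), ?_, ?_, ?_⟩
  · simp_rw [aux_rhoBar φ Λ _ _ hΛ h0]
    refine Tendsto.const_mul _ (Tendsto.add (hL.comp (tendsto_nhdsWithin_iff.2 ⟨hsub _, ?_⟩)) (hsum _))
    filter_upwards [self_mem_nhdsWithin] with p hp
    exact sub_neg.2 hp.2
  · simp_rw [aux_rhoBar φ Λ _ _ hΛ h0]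
    refine Tendsto.const_mul _ (Tendsto.add (hR.comp (tendsto_nhdsWithin_iff.2 ⟨hsub _, ?_⟩)) (hsum _))
    filter_upwards [self_mem_nhdsWithin] with p hp
    exact sub_pos.2 hp.2
  · have h := aux_rho φ Λ x x hΛ h0
    have hz : auxG φ Λ (x - x) = 0 := by
      have := aux_odd φ heven Λ 0
      rw [neg_zero] at this
      rw [sub_self]; linarith
    rw [hz] at h
    convert h using 2
    ring
end

section
/- For every 0 < ε < Λ, the function u ↦ ∫_ε^Λ (φh_t)′(u) dt is differentiable at every u ∈ ℝ, with derivative (d/du) ∫_ε^Λ (φh_t)′(u) dt = φ(u)·(h_Λ(u) − h_ε(u)) + ∫_ε^Λ [φ″(u)·h_t(u) + 2·φ′(u)·h_t′(u)] dt. (Here one uses the heat equation ∂_t h_t = ∂_u² h_t to evaluate ∫_ε^Λ φ(u)·∂_u² h_t(u) dt = φ(u)·(h_Λ(u) − h_ε(u)).) -/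
open MeasureTheory Topology Filter

noncomputable def heat2 (t u : ℝ) : ℝ := (u ^ 2 / (4 * t ^ 2) - 1 / (2 * t)) * heat t u

lemma heat_contOn : ContinuousOn (fun p : ℝ × ℝ => heat p.1 p.2) (Set.Ioi 0 ×ˢ Set.univ) := by
  unfold heat
  have h4 : ∀ p ∈ (Set.Ioi (0:ℝ) ×ˢ (Set.univ : Set ℝ)), Real.sqrt (4 * Real.pi * p.1) ≠ 0 := by
    rintro ⟨t, v⟩ ⟨ht, -⟩
    have ht : 0 < t := ht
    have := Real.pi_pos
    positivity
  have h5 : ∀ p ∈ (Set.Ioi (0:ℝ) ×ˢ (Set.univ : Set ℝ)), 4 * p.1 ≠ 0 := by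
    rintro ⟨t, v⟩ ⟨ht, -⟩
    have ht : 0 < t := ht
    positivity
  refine ContinuousOn.mul (ContinuousOn.inv₀ (by fun_prop) h4) ?_
  exact Real.continuous_exp.comp_continuousOn (ContinuousOn.div (by fun_prop) (by fun_prop) h5)

lemma heat'_contOn : ContinuousOn (fun p : ℝ × ℝ => heat' p.1 p.2) (Set.Ioi 0 ×ˢ Set.univ) := by
  unfold heat'
  have h5 : ∀ p ∈ (Set.Ioi (0:ℝ) ×ˢ (Set.univ : Set ℝ)), 2 * p.1 ≠ 0 := by
    rintro ⟨t, v⟩ ⟨ht, -⟩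
    have ht : 0 < t := ht
    positivity
  exact ContinuousOn.mul (ContinuousOn.div (by fun_prop) (by fun_prop) h5).neg heat_contOn

lemma heat2_contOn : ContinuousOn (fun p : ℝ × ℝ => heat2 p.1 p.2) (Set.Ioi 0 ×ˢ Set.univ) := by
  unfold heat2
  have h5 : ∀ p ∈ (Set.Ioi (0:ℝ) ×ˢ (Set.univ : Set ℝ)), 2 * p.1 ≠ 0 := by
    rintro ⟨t, v⟩ ⟨ht, -⟩
    have ht : 0 < t := ht
    positivity
  have h6 : ∀ p ∈ (Set.Ioi (0:ℝ) ×ˢ (Set.univ : Set ℝ)), 4 * p.1 ^ 2 ≠ 0 := by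
    rintro ⟨t, v⟩ ⟨ht, -⟩
    have ht : 0 < t := ht
    positivity
  exact ContinuousOn.mul ((ContinuousOn.div (by fun_prop) (by fun_prop) h6).sub
    (ContinuousOn.div (by fun_prop) (by fun_prop) h5)) heat_contOn

lemma heat_du (t u : ℝ) (ht : 0 < t) : HasDerivAt (fun v => heat t v) (heat' t u) u := by
  unfold heat' heat
  have h := ((((hasDerivAt_id u).pow 2).neg.div_const (4 * t)).exp).const_mul
    (Real.sqrt (4 * Real.pi * t))⁻¹
  refine h.congr_deriv ?_
  simp
  field_simp
  ring

lemma heat'_du (t u : ℝ) (ht : 0 < t) : HasDerivAt (fun v => heat' t v) (heat2 t u) u := by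
  have h := (((hasDerivAt_id u).div_const (2 * t)).neg).mul (heat_du t u ht)
  refine h.congr_deriv ?_
  unfold heat2 heat'
  simp
  field_simp
  ring

lemma heat_dt (t u : ℝ) (ht : 0 < t) : HasDerivAt (fun s => heat s u) (heat2 t u) t := by
  have hp := Real.pi_pos
  have hpos : 0 < 4 * Real.pi * t := by positivity
  have hs : Real.sqrt (4 * Real.pi * t) ≠ 0 := by positivity
  have h1 := (((hasDerivAt_id t).const_mul (4 * Real.pi)).sqrt hpos.ne').inv hs
  have h2 := ((hasDerivAt_const t (-(u ^ 2))).div ((hasDerivAt_id t).const_mul 4)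
    (by simpa using ht.ne')).exp
  have h := h1.mul h2
  refine h.congr_deriv ?_
  unfold heat2 heat
  simp only [id, Pi.inv_apply, Pi.div_apply]
  have hsq : Real.sqrt (4 * Real.pi * t) ^ 2 = 4 * Real.pi * t := Real.sq_sqrt hpos.le
  rw [hsq]
  generalize Real.exp (-(u ^ 2) / (4 * t)) = E
  generalize Real.sqrt (4 * Real.pi * t) = S at *
  field_simp
  ring

/-- For every `0 < ε < Λ`, the function `u ↦ ∫_ε^Λ (φh_t)′(u) dt` is differentiable at
every `u`, with derivative
`φ(u)·(h_Λ(u) − h_ε(u)) + ∫_ε^Λ [φ″(u)·h_t(u) + 2·φ′(u)·h_t′(u)] dt`. -/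
theorem stmt12 (φ : ℝ → ℝ) (hφ : ContDiff ℝ (⊤ : ℕ∞) φ) (hsupp : HasCompactSupport φ)
    (heven : ∀ x, φ (-x) = φ x) (δ : ℝ) (hδ : 0 < δ) (hone : ∀ x, |x| < δ → φ x = 1)
    (ε Λ : ℝ) (hε : 0 < ε) (hεΛ : ε < Λ) (u : ℝ) :
    HasDerivAt (fun v => ∫ t in ε..Λ, phiHeat' φ t v)
      (φ u * (heat Λ u - heat ε u) +
        ∫ t in ε..Λ, (deriv (deriv φ) u * heat t u + 2 * deriv φ u * heat' t u)) u := by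
  have hd1 : ContDiff ℝ (⊤ : ℕ∞) (deriv φ) := hφ.deriv'
  have hd2 : ContDiff ℝ (⊤ : ℕ∞) (deriv (deriv φ)) := hd1.deriv'
  have c0 := hφ.continuous
  have c1 := hd1.continuous
  have c2 := hd2.continuous
  let F' : ℝ → ℝ → ℝ := fun v t =>
    (deriv (deriv φ) v * heat t v + 2 * deriv φ v * heat' t v) + φ v * heat2 t v
  have hF'c : ContinuousOn (fun p : ℝ × ℝ => F' p.2 p.1) (Set.Ioi 0 ×ˢ Set.univ) := by
    refine ContinuousOn.add (ContinuousOn.add ?_ ?_) ?_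
    · exact ContinuousOn.mul (by fun_prop) heat_contOn
    · exact ContinuousOn.mul (by fun_prop) heat'_contOn
    · exact ContinuousOn.mul (by fun_prop) heat2_contOn
  have hslice : ∀ G : ℝ → ℝ → ℝ,
      ContinuousOn (fun p : ℝ × ℝ => G p.1 p.2) (Set.Ioi 0 ×ˢ Set.univ) →
      ∀ v, IntervalIntegrable (fun t => G t v) volume ε Λ := by
    intro G hG v
    apply ContinuousOn.intervalIntegrable
    rw [Set.uIcc_of_le hεΛ.le]
    exact hG.comp (f := fun t : ℝ => (t, v)) (by fun_prop)
      (fun t ht => ⟨lt_of_lt_of_le hε ht.1, trivial⟩)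
  have hF : ContinuousOn (fun p : ℝ × ℝ => phiHeat' φ p.1 p.2) (Set.Ioi 0 ×ˢ Set.univ) := by
    unfold phiHeat'
    exact ContinuousOn.add (ContinuousOn.mul (by fun_prop) heat_contOn)
      (ContinuousOn.mul (by fun_prop) heat'_contOn)
  obtain ⟨C, hC⟩ := (isCompact_Icc.prod (isCompact_closedBall u 1)).exists_bound_of_continuousOn
    (hF'c.mono (t := Set.Icc ε Λ ×ˢ Metric.closedBall u 1)
      (fun p hp => ⟨lt_of_lt_of_le hε hp.1.1, trivial⟩))
  have key := (intervalIntegral.hasDerivAt_integral_of_dominated_loc_of_deriv_le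
    (μ := volume) (a := ε) (b := Λ)
    (F := fun v t => phiHeat' φ t v) (F' := F') (x₀ := u) (bound := fun _ => C)
    (Metric.ball_mem_nhds u one_pos)
    (Eventually.of_forall fun v => ((hslice _ hF v).def'.aestronglyMeasurable))
    (hslice _ hF u)
    ((hslice (fun t v => F' v t) hF'c u).def'.aestronglyMeasurable)
    (Eventually.of_forall fun t ht v hv => by
      rw [Set.uIoc_of_le hεΛ.le] at ht
      exact hC (t, v) ⟨⟨ht.1.le, ht.2⟩, Metric.ball_subset_closedBall hv⟩)
    (by simp)
    (Eventually.of_forall fun t ht v hv => by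
      rw [Set.uIoc_of_le hεΛ.le] at ht
      have ht0 : 0 < t := hε.trans ht.1
      have e0 : HasDerivAt φ (deriv φ v) v := (hφ.differentiable (by simp) v).hasDerivAt
      have e1 : HasDerivAt (deriv φ) (deriv (deriv φ) v) v :=
        (hd1.differentiable (by simp) v).hasDerivAt
      refine ((e1.mul (heat_du t v ht0)).add (e0.mul (heat'_du t v ht0))).congr_deriv ?_
      simp only [F']
      ring)).2
  refine key.congr_deriv ?_
  have hI := intervalIntegral.integral_eq_sub_of_hasDerivAt (a := ε) (b := Λ)
    (f := fun s => heat s u) (f' := fun s => heat2 s u)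
    (fun t ht => by
      rw [Set.uIcc_of_le hεΛ.le] at ht
      exact heat_dt t u (lt_of_lt_of_le hε ht.1))
    (hslice heat2 heat2_contOn u)
  simp only [F']
  rw [intervalIntegral.integral_add, intervalIntegral.integral_const_mul, hI, add_comm]
  · exact ((hslice _ heat_contOn u).const_mul _).add ((hslice _ heat'_contOn u).const_mul _)
  · exact (hslice _ heat2_contOn u).const_mul _
end
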